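/- arXiv:0912.3904 — 2 statements merged into one kernel-verified Lean document; each statement's English description precedes it below -/
import Mathlib

section
/- Let (B_n)_{n≥1} be a sequence with B_n ∈ A_n^{m(n)} such that B_n → W for a multigraphon W with ρ(W) < ∞, and such that condition (E) holds. Then lim_{n→∞} 2m(n)/n² = ρ(W). -/
/-!
The quantity `2 m(n) / n²` is the mean of the entry of `B n` at a uniformly chosen ordered pair of
vertices, and `ρ(W)` is the mean of the law `l ↦ ∫∫ W(x,y,l)`. So it is enough to show that the
first of these laws converges pointwise to the second and that first moments pass to the limit.

Both points follow from `tendsto_moment`: if probability mass functions `p n` converge pointwise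
to a probability mass function `q` and `∑ f² p n` is bounded, then `∑ f p n → ∑ f q`. It is obtained
from Fatou's lemma for the non-negative functions `δ f² + 1/(4δ) ± f`; the constant contributes the
same amount to both sides because no mass is lost in the limit, and the quadratic term costs at
most `δ` times the moment bound.

* Convergence `B n → W` for two-vertex multigraphs gives the pointwise convergence of the joint law
  of `(B i i, B i j, B j j)`, the diagonal entries included. Applying `tendsto_moment` to the
  indicator of a value of the middle entry removes the diagonal entries (`tendsto_multiplicity`).
* Condition (E) bounds the second moments of the entries (`second_moment_bound`), so
  `tendsto_moment` applies to `f l = l`.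

The moment bound is inherited by the limit, so `∑ l W(x,y,l)` is integrable on the unit square and
Fubini's theorem identifies the limit with the iterated integral `rhoW W`.
-/

open MeasureTheory Filter Set
open scoped Classical ENNReal Topology BigOperators

noncomputable section

/-- `B : ℕ → ℕ → ℕ` is the adjacency matrix of a multigraph on vertex set `{0,…,n-1}`:
symmetric, even diagonal entries (loops counted twice), vanishing outside `[0,n)²`. -/
def IsAdjOn (n : ℕ) (B : ℕ → ℕ → ℕ) : Prop :=
  (∀ i j, B i j = B j i) ∧ (∀ i, 2 ∣ B i i) ∧ ∀ i j, n ≤ i ∨ n ≤ j → B i j = 0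

/-- Degree `d(B,i)` of vertex `i` in a multigraph on `n` vertices. -/
def degB (n : ℕ) (B : ℕ → ℕ → ℕ) (i : ℕ) : ℕ := ∑ j ∈ Finset.range n, B i j

/-- Adjacency matrix of a multigraph on `n` vertices with `m` edges. -/
def IsAdjOnM (n m : ℕ) (B : ℕ → ℕ → ℕ) : Prop :=
  IsAdjOn n B ∧ ∑ i ∈ Finset.range n, ∑ j ∈ Finset.range n, B i j = 2 * m

/-- Top-left `k × k` submatrix (set to zero outside). -/
def subMat (k : ℕ) (B : ℕ → ℕ → ℕ) : ℕ → ℕ → ℕ :=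
  fun i j => if i < k ∧ j < k then B i j else 0

/-- Induced homomorphism density `t_=(A,B)` of a `k`-vertex multigraph in an `n`-vertex one. -/
def tEqB (k n : ℕ) (A B : ℕ → ℕ → ℕ) : ℝ :=
  ((Finset.univ.filter fun φ : Fin k → Fin n =>
      ∀ i j : Fin k, A i j = B (φ i) (φ j)).card : ℝ) / (n : ℝ) ^ k

/-- A multigraphon: symmetric, probability distribution on ℕ in each fibre over `[0,1]²`,
no odd diagonal values. -/
def IsMultigraphon (W : ℝ → ℝ → ℕ → ℝ) : Prop :=
  Measurable (fun p : ℝ × ℝ × ℕ => W p.1 p.2.1 p.2.2) ∧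
  (∀ x y k, 0 ≤ W x y k ∧ W x y k ≤ 1) ∧
  (∀ x y k, W x y k = W y x k) ∧
  (∀ x ∈ Icc (0:ℝ) 1, ∀ y ∈ Icc (0:ℝ) 1, (∑' k : ℕ, W x y k) = 1) ∧
  (∀ x k, W x x (2 * k + 1) = 0)

/-- Induced homomorphism density `t_=(A,W)` of a multigraph in a multigraphon. -/
def tEqW (k : ℕ) (A : ℕ → ℕ → ℕ) (W : ℝ → ℝ → ℕ → ℝ) : ℝ :=
  ∫ x : Fin k → ℝ in Set.univ.pi (fun _ : Fin k => Icc (0:ℝ) 1),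
    ∏ i : Fin k, ∏ j ∈ Finset.univ.filter (fun j : Fin k => i ≤ j),
      W (x i) (x j) (A i j)

/-- The average degree `D(W,x)` of a multigraphon at `x`. -/
def degW (W : ℝ → ℝ → ℕ → ℝ) (x : ℝ) : ℝ :=
  ∫ y in Icc (0:ℝ) 1, ∑' k : ℕ, (k : ℝ) * W x y k

/-- The edge density `ρ(W)` of a multigraphon. -/
def rhoW (W : ℝ → ℝ → ℕ → ℝ) : ℝ := ∫ x in Icc (0:ℝ) 1, degW W x

/-- One step of the edge reconnecting dynamics: the edge `{vold, w}` is replaced by `{vnew, w}`. -/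
def stepER (B : ℕ → ℕ → ℕ) (vold w vnew : ℕ) : ℕ → ℕ → ℕ := fun a b =>
  B a b - (if a = vold ∧ b = w then 1 else 0) - (if a = w ∧ b = vold then 1 else 0)
    + (if a = vnew ∧ b = w then 1 else 0) + (if a = w ∧ b = vnew then 1 else 0)

/-- Transition probability of the edge reconnecting model with parameter `κ`
on multigraphs with `n` vertices and `m` edges. -/
def transER (κ : ℝ) (n m : ℕ) (B B' : ℕ → ℕ → ℕ) : ℝ :=
  ∑ v ∈ Finset.range n, ∑ w ∈ Finset.range n, ∑ u ∈ Finset.range n,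
    ((B v w : ℝ) / (2 * m)) * (((degB n B u : ℝ) + κ) / (2 * m + n * κ)) *
      (if B' = stepER B v w u then 1 else 0)

/-- `(X T)_{T≥0}` is an edge reconnecting model with parameter `κ` on `A_n^m`:
a Markov chain with the edge reconnecting transition probabilities. -/
def IsEdgeReconnecting (κ : ℝ) {Ω : Type*} [MeasurableSpace Ω] (μ : Measure Ω)
    (n m : ℕ) (X : ℕ → Ω → ℕ → ℕ → ℕ) : Prop :=
  (∀ T i j, Measurable fun ω => X T ω i j) ∧
  (∀ T ω, IsAdjOnM n m (X T ω)) ∧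
  ∀ (T : ℕ) (past : ℕ → ℕ → ℕ → ℕ) (B' : ℕ → ℕ → ℕ),
    μ {ω | (∀ S ≤ T, X S ω = past S) ∧ X (T + 1) ω = B'} =
      μ {ω | ∀ S ≤ T, X S ω = past S} * ENNReal.ofReal (transER κ n m (past T) B')

/-- Vertex exchangeability of a random adjacency matrix on `n` vertices. -/
def VertexExchangeable {Ω : Type*} [MeasurableSpace Ω] (μ : Measure Ω)
    (n : ℕ) (X0 : Ω → ℕ → ℕ → ℕ) : Prop :=
  ∀ τ : Equiv.Perm ℕ, (∀ i, n ≤ i → τ i = i) →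
    ∀ B : ℕ → ℕ → ℕ, μ {ω | X0 ω = B} = μ {ω | (fun i j => X0 ω (τ i) (τ j)) = B}

/-- Poisson point probability `p(k,λ)`. -/
def poiP (k : ℕ) (l : ℝ) : ℝ := Real.exp (-l) * l ^ k / (Nat.factorial k : ℝ)

/-- Binomial point probability `b(k,n,p)`. -/
def binP (k n : ℕ) (p : ℝ) : ℝ := (n.choose k : ℝ) * p ^ k * (1 - p) ^ (n - k)

/-- `q(t,h,k,μ)`: time-`t` transition probability from `h` to `k` of the M/M/∞ queue with
arrival rate `μ` and service rate 1. -/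
def qMM (t : ℝ) (h k : ℕ) (μ : ℝ) : ℝ :=
  ∑ l ∈ Finset.range (k + 1), binP l h (Real.exp (-t)) * poiP (k - l) ((1 - Real.exp (-t)) * μ)

/-- The multigraphon `W_t` describing the edge reconnecting model on the `n²` time scale. -/
def WtER (W : ℝ → ℝ → ℕ → ℝ) (t : ℝ) : ℝ → ℝ → ℕ → ℝ := fun x y k =>
  if x = y then
    (if 2 ∣ k then
      ∑' h : ℕ, W x x (2 * h) * qMM t h (k / 2) (degW W x ^ 2 / (2 * rhoW W))
     else 0)
  else ∑' h : ℕ, W x y h * qMM t h k (degW W x * degW W y / rhoW W)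

/-- Gamma density `g(x,α,β)`. -/
def gamP (x α β : ℝ) : ℝ :=
  if 0 < x then x ^ (α - 1) * (β ^ α * Real.exp (-(β * x)) / Real.Gamma α) else 0

/-- `τ(α,t) = α/(e^{αt}-1)`. -/
def tauCIR (α t : ℝ) : ℝ := α / (Real.exp (α * t) - 1)

/-- Transition density `f(t,z,y)` of the Cox–Ingersoll–Ross process with parameters `κ, ρ`. -/
def cirDens (κ ρ t z y : ℝ) : ℝ :=
  ∑' i : ℕ, poiP i (z * tauCIR (κ / ρ) t) * gamP y ((κ : ℝ) + i) (tauCIR (κ / ρ) t + κ / ρ)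

/-- The measure `dF₀` where `F₀(x) = Leb{y ∈ [0,1] : D(W,y) ≤ x}`: the push-forward of
Lebesgue measure on `[0,1]` under the average degree function. -/
def F0meas (W : ℝ → ℝ → ℕ → ℝ) : Measure ℝ :=
  Measure.map (degW W) (volume.restrict (Icc (0:ℝ) 1))

/-- The distribution function `F₀(x) = Leb{y ∈ [0,1] : D(W,y) ≤ x}`. -/
def F0fun (W : ℝ → ℝ → ℕ → ℝ) (x : ℝ) : ℝ :=
  (volume {y ∈ Icc (0:ℝ) 1 | degW W y ≤ x}).toReal

/-- Generalized inverse `F₀⁻¹(x) = min{z : F₀(z) ≥ x}`. -/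
def F0inv (W : ℝ → ℝ → ℕ → ℝ) (x : ℝ) : ℝ := sInf {z : ℝ | x ≤ F0fun W z}

/-- The mixed CIR density `f(t,y) = ∫₀^∞ f(t,z,y) dF₀(z)`. -/
def fCIRmix (κ ρ : ℝ) (W : ℝ → ℝ → ℕ → ℝ) (t y : ℝ) : ℝ :=
  ∫ z, cirDens κ ρ t z y ∂(F0meas W)

/-- The distribution function `F_t(x) = ∫₀ˣ f(t,y) dy`. -/
def Fcir (κ ρ : ℝ) (W : ℝ → ℝ → ℕ → ℝ) (t x : ℝ) : ℝ :=
  ∫ y in Ioc (0:ℝ) x, fCIRmix κ ρ W t y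

/-- Generalized inverse `F_t⁻¹(x) = min{z : F_t(z) ≥ x}`. -/
def FcirInv (κ ρ : ℝ) (W : ℝ → ℝ → ℕ → ℝ) (t x : ℝ) : ℝ :=
  sInf {z : ℝ | x ≤ Fcir κ ρ W t z}

/-- The multigraphon `Ŵ_t` describing the edge reconnecting model on the `n³` time scale. -/
def WhatER (κ : ℝ) (W : ℝ → ℝ → ℕ → ℝ) (t : ℝ) : ℝ → ℝ → ℕ → ℝ := fun x y k =>
  if x = y then
    (if 2 ∣ k then poiP (k / 2) (FcirInv κ (rhoW W) W t x ^ 2 / (2 * rhoW W)) else 0)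
  else poiP k (FcirInv κ (rhoW W) W t x * FcirInv κ (rhoW W) W t y / rhoW W)

/-- The product measure on `ℝ^k` of `k` i.i.d. coordinates with density `f(t,·)`. -/
def cirPi (κ ρ : ℝ) (W : ℝ → ℝ → ℕ → ℝ) (t : ℝ) (k : ℕ) : Measure (Fin k → ℝ) :=
  volume.withDensity fun z => ∏ i : Fin k, ENNReal.ofReal (fCIRmix κ ρ W t (z i))

/-- Condition (E): uniform exponential moment bound for the initial multigraphs. -/
def CondE (B : (n : ℕ) → ℕ → ℕ → ℕ) : Prop :=
  ∃ lam : ℝ, 0 < lam ∧ ∃ C : ℝ, ∀ n : ℕ,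
    (∑ i ∈ Finset.range n, ∑ j ∈ (Finset.range n).filter (fun j => i < j),
        Real.exp (lam * (B n i j : ℝ))) ≤ C * (n.choose 2 : ℝ) ∧
    (∑ i ∈ Finset.range n, Real.exp (lam * (B n i i : ℝ))) ≤ C * (n : ℝ)

/-- Convergence `B_n → W` of a sequence of multigraphs to a multigraphon. -/
def GraphSeqConvTo (B : (n : ℕ) → ℕ → ℕ → ℕ) (W : ℝ → ℝ → ℕ → ℝ) : Prop :=
  ∀ (k : ℕ) (A : ℕ → ℕ → ℕ), IsAdjOn k A →
    Tendsto (fun n => tEqB k n A (B n)) atTop (𝓝 (tEqW k A W))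


/-! ### Convergence of moments on a discrete set -/

/-- Fatou's lemma for sums of non-negative terms. -/
lemma fatou_hasSum {ι : Type*} (p : ℕ → ι → ℝ) (q g : ι → ℝ) (t : ℕ → ℝ) (G : ℝ)
    (hp : ∀ n i, 0 ≤ p n i) (hg : ∀ i, 0 ≤ g i)
    (hlim : ∀ i, Tendsto (fun n => p n i) atTop (𝓝 (q i)))
    (hG : HasSum (fun i => g i * q i) G)
    (ht : ∀ᶠ n in atTop, HasSum (fun i => g i * p n i) (t n)) (ε : ℝ) (hε : 0 < ε) :
    ∀ᶠ n in atTop, G - ε < t n := by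
  obtain ⟨S, hS⟩ := (hG.eventually (lt_mem_nhds (show G - ε < G by linarith))).exists
  have hlimS : Tendsto (fun n => ∑ i ∈ S, g i * p n i) atTop (𝓝 (∑ i ∈ S, g i * q i)) :=
    tendsto_finsetSum _ fun i _ => (hlim i).const_mul _
  filter_upwards [ht, hlimS.eventually (lt_mem_nhds hS)] with n hn hn'
  exact hn'.trans_le (sum_le_hasSum S (fun i _ => mul_nonneg (hg i) (hp n i)) hn)

/-- The second-moment bound passes to the pointwise limit. -/
lemma summable_sq_of_bound {ι : Type*} (p : ℕ → ι → ℝ) (q f : ι → ℝ) (r : ℕ → ℝ) (C : ℝ)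
    (hp : ∀ n i, 0 ≤ p n i)
    (hlim : ∀ i, Tendsto (fun n => p n i) atTop (𝓝 (q i)))
    (hr : ∀ᶠ n in atTop, HasSum (fun i => f i ^ 2 * p n i) (r n) ∧ r n ≤ C) :
    Summable (fun i => f i ^ 2 * q i) := by
  have hq : ∀ i, 0 ≤ q i := fun i => ge_of_tendsto' (hlim i) fun n => hp n i
  refine summable_of_sum_le (c := C) (fun i => mul_nonneg (sq_nonneg _) (hq i)) fun S => ?_
  have hlimS : Tendsto (fun n => ∑ i ∈ S, f i ^ 2 * p n i) atTop
      (𝓝 (∑ i ∈ S, f i ^ 2 * q i)) :=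
    tendsto_finsetSum _ fun i _ => (hlim i).const_mul _
  refine le_of_tendsto hlimS ?_
  filter_upwards [hr] with n hn
  exact (sum_le_hasSum S (fun i _ => mul_nonneg (sq_nonneg _) (hp n i)) hn.1).trans hn.2

lemma summable_of_sq {ι : Type*} {q f : ι → ℝ} (hq : ∀ i, 0 ≤ q i) (hq1 : Summable q)
    (h2 : Summable (fun i => f i ^ 2 * q i)) : Summable (fun i => f i * q i) := by
  refine Summable.of_norm_bounded (h2.add hq1) fun i => ?_
  rw [Real.norm_eq_abs, abs_mul, abs_of_nonneg (hq i)]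
  have : |f i| ≤ f i ^ 2 + 1 := by
    rw [← sq_abs]; nlinarith [sq_nonneg (|f i| - 1), abs_nonneg (f i)]
  nlinarith [hq i]

/-- Lower semicontinuity of first moments. The function `f` may take negative values: Fatou's lemma
is applied to `δ f² + 1/(4δ) + f ≥ 0` with `δ` small. -/
lemma eventually_lower {ι : Type*} (p : ℕ → ι → ℝ) (q f : ι → ℝ) (s r : ℕ → ℝ) (C : ℝ)
    (hp : ∀ n i, 0 ≤ p n i)
    (hlim : ∀ i, Tendsto (fun n => p n i) atTop (𝓝 (q i)))
    (h1 : ∀ᶠ n in atTop, HasSum (p n) 1) (hq1 : HasSum q 1)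
    (hs : ∀ᶠ n in atTop, HasSum (fun i => f i * p n i) (s n))
    (hr : ∀ᶠ n in atTop, HasSum (fun i => f i ^ 2 * p n i) (r n) ∧ r n ≤ C)
    (ε : ℝ) (hε : 0 < ε) :
    ∀ᶠ n in atTop, (∑' i, f i * q i) - ε < s n := by
  have hq : ∀ i, 0 ≤ q i := fun i => ge_of_tendsto' (hlim i) fun n => hp n i
  have h2 := summable_sq_of_bound p q f r C hp hlim hr
  have hf := summable_of_sq hq hq1.summable h2
  obtain ⟨δ, hδ, hδC⟩ : ∃ δ : ℝ, 0 < δ ∧ δ * C ≤ ε / 2 := by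
    refine ⟨ε / (2 * (|C| + 1)), by positivity, ?_⟩
    rw [div_mul_eq_mul_div, div_le_div_iff₀ (by positivity) (by norm_num)]
    nlinarith [le_abs_self C]
  have hG := ((h2.hasSum.mul_left δ).add (hq1.mul_left (1 / (4 * δ)))).add hf.hasSum
  have key := fatou_hasSum p q (fun i => δ * f i ^ 2 + 1 / (4 * δ) + f i)
    (fun n => δ * r n + 1 / (4 * δ) * 1 + s n) _ hp (fun i => ?_) hlim
    (hG.congr_fun fun i => by ring) ?_ (ε / 2) (by positivity)
  · filter_upwards [key, hr] with n hn hrn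
    have h0 : 0 ≤ ∑' i, f i ^ 2 * q i := tsum_nonneg fun i => mul_nonneg (sq_nonneg _) (hq i)
    nlinarith [mul_nonneg hδ.le h0, mul_le_mul_of_nonneg_left hrn.2 hδ.le]
  · -- AM-GM: the quadratic `δ u² + u + 1/(4δ)` is the square `δ (u + 1/(2δ))²`.
    have : δ * f i ^ 2 + 1 / (4 * δ) + f i = δ * (f i + 1 / (2 * δ)) ^ 2 := by
      field_simp; ring
    rw [this]; positivity
  · filter_upwards [h1, hs, hr] with n hn1 hns hnr
    exact (((hnr.1.mul_left δ).add (hn1.mul_left (1 / (4 * δ)))).add hns).congr_fun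
      fun i => by ring

/-- Convergence of first moments under a uniform bound on second moments, for probability mass
functions `p n` on a discrete set that converge pointwise to a probability mass function `q`. -/
lemma tendsto_moment {ι : Type*} (p : ℕ → ι → ℝ) (q f : ι → ℝ) (s r : ℕ → ℝ) (C : ℝ)
    (hp : ∀ n i, 0 ≤ p n i)
    (hlim : ∀ i, Tendsto (fun n => p n i) atTop (𝓝 (q i)))
    (h1 : ∀ᶠ n in atTop, HasSum (p n) 1) (hq1 : HasSum q 1)
    (hs : ∀ᶠ n in atTop, HasSum (fun i => f i * p n i) (s n))
    (hr : ∀ᶠ n in atTop, HasSum (fun i => f i ^ 2 * p n i) (r n) ∧ r n ≤ C) :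
    Tendsto s atTop (𝓝 (∑' i, f i * q i)) := by
  rw [Metric.tendsto_nhds]
  intro ε hε
  have hlow := eventually_lower p q f s r C hp hlim h1 hq1 hs hr ε hε
  -- The upper bound is the lower bound for `-f`.
  have hup := eventually_lower p q (fun i => -f i) (fun n => -s n) r C hp hlim h1 hq1
    (by filter_upwards [hs] with n hn; simpa using hn.neg) (by simpa using hr) ε hε
  filter_upwards [hlow, hup] with n h h'
  simp only [neg_mul, tsum_neg] at h'
  rw [Real.dist_eq, abs_lt]
  constructor <;> linarith

/-- Summation against the empirical distribution of `g` on a finite set. -/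
lemma hasSum_empirical {T ι : Type*} [Fintype T] [DecidableEq ι] (g : T → ι) (h : ι → ℝ) (N : ℝ) :
    HasSum (fun c => h c * ((Finset.univ.filter fun t => g t = c).card / N))
      ((∑ t, h (g t)) / N) := by
  have h0 : HasSum (fun c => ∑ t, if c = g t then h (g t) else 0) (∑ t, h (g t)) :=
    hasSum_sum fun t _ => hasSum_ite_eq (g t) (h (g t))
  refine (h0.div_const N).congr_fun fun c => ?_
  have : ∀ t, (if c = g t then h (g t) else 0) = h c * if g t = c then 1 else 0 := by
    intro t
    by_cases hc : c = g t
    · simp [hc]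
    · simp [hc, Ne.symm hc]
  simp only [this]
  rw [← Finset.mul_sum, Finset.sum_boole, mul_div_assoc]

/-! ### Multigraphs and multigraphons on two vertices -/

/-- The uniform distribution on `[0,1]²`. -/
def unifSq : Measure (ℝ × ℝ) :=
  (volume.restrict (Icc (0:ℝ) 1)).prod (volume.restrict (Icc (0:ℝ) 1))

instance : IsProbabilityMeasure (volume.restrict (Icc (0:ℝ) 1)) := ⟨by simp⟩

instance : IsProbabilityMeasure unifSq := by unfold unifSq; infer_instance

lemma ae_unifSq : ∀ᵐ z ∂unifSq, z.1 ∈ Icc (0:ℝ) 1 ∧ z.2 ∈ Icc (0:ℝ) 1 := by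
  rw [unifSq, Measure.prod_restrict]
  filter_upwards [ae_restrict_mem (measurableSet_Icc.prod measurableSet_Icc)] with z hz using hz

/-- The weight that a multigraphon gives to the multigraph on two vertices located at `z.1`, `z.2`,
with diagonal entries `c.1`, `c.2.2` and off-diagonal entry `c.2.1`. -/
def pairWeight (W : ℝ → ℝ → ℕ → ℝ) (c : ℕ × ℕ × ℕ) (z : ℝ × ℝ) : ℝ :=
  W z.1 z.1 c.1 * (W z.1 z.2 c.2.1 * W z.2 z.2 c.2.2)

/-- The two-vertex matrix with diagonal entries `c.1`, `c.2.2` and off-diagonal entry `c.2.1`. -/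
def pairMat (c : ℕ × ℕ × ℕ) : ℕ → ℕ → ℕ := fun i j =>
  if i = 0 ∧ j = 0 then c.1 else if i = 1 ∧ j = 1 then c.2.2 else
    if i < 2 ∧ j < 2 then c.2.1 else 0

/-- The triple describing the submultigraph of `B` at the ordered pair `φ` of vertices. -/
def pairType (B : ℕ → ℕ → ℕ) (n : ℕ) (φ : Fin 2 → Fin n) : ℕ × ℕ × ℕ :=
  (B (φ 0) (φ 0), B (φ 0) (φ 1), B (φ 1) (φ 1))

lemma isAdjOn_pairMat {c : ℕ × ℕ × ℕ} (h1 : 2 ∣ c.1) (h2 : 2 ∣ c.2.2) :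
    IsAdjOn 2 (pairMat c) := by
  refine ⟨fun i j => ?_, fun i => ?_, fun i j h => ?_⟩
  · simp only [pairMat, and_comm]
  · unfold pairMat
    split_ifs
    · exact h1
    · exact h2
    · omega
    · exact dvd_zero _
  · unfold pairMat
    rw [if_neg (by omega), if_neg (by omega), if_neg (by omega)]

lemma tEqB_pairMat {B : ℕ → ℕ → ℕ} {n : ℕ} (hB : ∀ i j, B i j = B j i) (c : ℕ × ℕ × ℕ) :
    tEqB 2 n (pairMat c) B =
      ((Finset.univ.filter fun φ => pairType B n φ = c).card : ℝ) / (n : ℝ) ^ 2 := by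
  unfold tEqB
  congr 3
  ext φ
  obtain ⟨a, l, b⟩ := c
  simp [Fin.forall_fin_two, pairMat, pairType, hB (φ 1) (φ 0), eq_comm]
  tauto

lemma tEqW_pairMat (W : ℝ → ℝ → ℕ → ℝ) (c : ℕ × ℕ × ℕ) :
    tEqW 2 (pairMat c) W = ∫ z, pairWeight W c z ∂unifSq := by
  have h := (measurePreserving_finTwoArrow (volume.restrict (Icc (0:ℝ) 1))).integral_comp'
    (pairWeight W c)
  unfold unifSq
  rw [← h, tEqW, volume_pi, Measure.restrict_pi_pi]
  congr 1
  ext x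
  have e0 : Finset.univ.filter (fun j : Fin 2 => 0 ≤ j) = {0, 1} := by decide
  have e1 : Finset.univ.filter (fun j : Fin 2 => 1 ≤ j) = {1} := by decide
  rw [Fin.prod_univ_two, e0, e1, Finset.prod_pair (by decide), Finset.prod_singleton]
  simp [pairWeight, pairMat, MeasurableEquiv.finTwoArrow, mul_assoc]

lemma hasSum_fibre {W : ℝ → ℝ → ℕ → ℝ} (hW : IsMultigraphon W) {x y : ℝ}
    (hx : x ∈ Icc (0:ℝ) 1) (hy : y ∈ Icc (0:ℝ) 1) : HasSum (W x y) 1 := by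
  have h := hW.2.2.2.1 x hx y hy
  have hs : Summable (W x y) := by
    by_contra hs
    rw [tsum_eq_zero_of_not_summable hs] at h
    exact zero_ne_one h
  exact h ▸ hs.hasSum

lemma measurable_W {W : ℝ → ℝ → ℕ → ℝ} (hW : IsMultigraphon W) {f g : ℝ × ℝ → ℝ}
    (hf : Measurable f) (hg : Measurable g) (k : ℕ) : Measurable fun z => W (f z) (g z) k :=
  hW.1.comp (hf.prodMk (hg.prodMk measurable_const))

lemma measurable_pairWeight {W : ℝ → ℝ → ℕ → ℝ} (hW : IsMultigraphon W) (c : ℕ × ℕ × ℕ) :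
    Measurable (pairWeight W c) :=
  (measurable_W hW measurable_fst measurable_fst _).mul
    ((measurable_W hW measurable_fst measurable_snd _).mul
      (measurable_W hW measurable_snd measurable_snd _))

/-- Summing a `[0,1]`-valued function of the edge multiplicity over all two-vertex multigraphs
removes the two diagonal factors, since each of these has total mass one. -/
lemma hasSum_pairWeight {W : ℝ → ℝ → ℕ → ℝ} (hW : IsMultigraphon W) (u : ℕ → ℝ)
    (hu0 : ∀ l, 0 ≤ u l) (hu1 : ∀ l, u l ≤ 1) :
    HasSum (fun c : ℕ × ℕ × ℕ => u c.2.1 * ∫ z, pairWeight W c z ∂unifSq)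
      (∫ z, ∑' l, u l * W z.1 z.2 l ∂unifSq) := by
  have hw0 : ∀ c z, 0 ≤ pairWeight W c z := fun c z =>
    mul_nonneg (hW.2.1 _ _ _).1 (mul_nonneg (hW.2.1 _ _ _).1 (hW.2.1 _ _ _).1)
  have key : ∀ᵐ z ∂unifSq, HasSum (fun c : ℕ × ℕ × ℕ => u c.2.1 * pairWeight W c z)
      (∑' l, u l * W z.1 z.2 l) ∧ 0 ≤ (∑' l, u l * W z.1 z.2 l) ∧
        (∑' l, u l * W z.1 z.2 l) ≤ 1 := by
    filter_upwards [ae_unifSq] with z hz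
    have h1 := hasSum_fibre hW hz.1 hz.1
    have h2 := hasSum_fibre hW hz.1 hz.2
    have h3 := hasSum_fibre hW hz.2 hz.2
    have hle : ∀ l, u l * W z.1 z.2 l ≤ W z.1 z.2 l := fun l =>
      mul_le_of_le_one_left (hW.2.1 _ _ _).1 (hu1 l)
    have hnn : ∀ l, 0 ≤ u l * W z.1 z.2 l := fun l => mul_nonneg (hu0 l) (hW.2.1 _ _ _).1
    have hs : Summable fun l => u l * W z.1 z.2 l := Summable.of_nonneg_of_le hnn hle h2.summable
    have h4 := hs.hasSum.mul h3 (hs.mul_of_nonneg h3.summable hnn fun b => (hW.2.1 _ _ _).1)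
    have h5 := h1.mul h4 (h1.summable.mul_of_nonneg h4.summable (fun a => (hW.2.1 _ _ _).1)
      fun c => mul_nonneg (hnn _) (hW.2.1 _ _ _).1)
    simp only [one_mul, mul_one] at h5
    refine ⟨h5.congr_fun fun c => ?_, tsum_nonneg hnn, ?_⟩
    · simp only [pairWeight]; ring
    · exact hasSum_le hle hs.hasSum h2
  have hmeas : ∀ c : ℕ × ℕ × ℕ, Measurable fun z => u c.2.1 * pairWeight W c z := fun c =>
    (measurable_pairWeight hW c).const_mul _
  have main := hasSum_integral_of_dominated_convergence (μ := unifSq)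
    (F := fun (c : ℕ × ℕ × ℕ) z => u c.2.1 * pairWeight W c z)
    (f := fun z => ∑' l, u l * W z.1 z.2 l)
    (fun c z => u c.2.1 * pairWeight W c z) (fun c => (hmeas c).aestronglyMeasurable)
    (fun c => ae_of_all _ fun z => by
      rw [Real.norm_eq_abs, abs_of_nonneg (mul_nonneg (hu0 _) (hw0 _ _))])
    (by filter_upwards [key] with z hz using hz.1.summable)
    ?_ (by filter_upwards [key] with z hz using hz.1)
  · simpa only [integral_const_mul] using main
  · have hm : AEMeasurable (fun z : ℝ × ℝ => ∑' l, u l * W z.1 z.2 l) unifSq :=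
      (Measurable.tsum fun l =>
        (measurable_W hW measurable_fst measurable_snd l).const_mul (u l)).aemeasurable
    have hi : Integrable (fun z : ℝ × ℝ => ∑' l, u l * W z.1 z.2 l) unifSq := by
      refine (integrable_const (1:ℝ)).mono' hm.aestronglyMeasurable ?_
      filter_upwards [key] with z hz
      rw [Real.norm_eq_abs, abs_of_nonneg hz.2.1]
      exact hz.2.2
    refine hi.congr ?_
    filter_upwards [key] with z hz using hz.1.tsum_eq.symm

/-- Monotone convergence. Where the series diverges, both the real sum and the real part of the
extended sum are zero. -/
lemma integrable_tsum_of_nonneg {α : Type*} [MeasurableSpace α] {μ : Measure α}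
    {F : ℕ → α → ℝ} (hF : ∀ l, Integrable (F l) μ) (h0 : ∀ l x, 0 ≤ F l x)
    (hs : Summable fun l => ∫ x, F l x ∂μ) : Integrable (fun x => ∑' l, F l x) μ := by
  have e : (fun x => ∑' l, F l x) = fun x => (∑' l, ENNReal.ofReal (F l x)).toReal := by
    ext x
    rw [ENNReal.tsum_toReal_eq fun l => ENNReal.ofReal_ne_top]
    simp only [ENNReal.toReal_ofReal (h0 _ x)]
  rw [e]
  have hm : ∀ l, AEMeasurable (fun x => ENNReal.ofReal (F l x)) μ := fun l =>
    (hF l).1.aemeasurable.ennreal_ofReal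
  refine integrable_toReal_of_lintegral_ne_top (AEMeasurable.tsum hm) ?_
  rw [lintegral_tsum hm]
  have : ∀ l, ∫⁻ x, ENNReal.ofReal (F l x) ∂μ = ENNReal.ofReal (∫ x, F l x ∂μ) := fun l =>
    (ofReal_integral_eq_lintegral_ofReal (hF l) (ae_of_all _ (h0 l))).symm
  simp only [this]
  exact hs.tsum_ofReal_ne_top

/-! ### Moments of the matrix entries -/

lemma sum_finTwoArrow (n : ℕ) (F : ℕ → ℕ → ℝ) :
    ∑ φ : Fin 2 → Fin n, F (φ 0) (φ 1) =
      ∑ i ∈ Finset.range n, ∑ j ∈ Finset.range n, F i j := by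
  rw [Fintype.sum_equiv (finTwoArrowEquiv (Fin n)) (fun φ : Fin 2 → Fin n => F (φ 0) (φ 1))
      (fun z => F z.1 z.2) (fun φ => rfl),
    Fintype.sum_prod_type, Finset.sum_range]
  refine Finset.sum_congr rfl fun i _ => ?_
  rw [Finset.sum_range]

/-- A double sum of a symmetric array is twice its upper triangle plus its diagonal. -/
lemma sum_symm (n : ℕ) (F : ℕ → ℕ → ℝ) (hF : ∀ i j, F i j = F j i) :
    ∑ i ∈ Finset.range n, ∑ j ∈ Finset.range n, F i j =
      2 * (∑ i ∈ Finset.range n, ∑ j ∈ (Finset.range n).filter (fun j => i < j), F i j) +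
        ∑ i ∈ Finset.range n, F i i := by
  have hswap : ∑ i ∈ Finset.range n, ∑ j ∈ (Finset.range n).filter (fun j => i < j), F i j =
      ∑ i ∈ Finset.range n, ∑ j ∈ (Finset.range n).filter (fun j => j < i), F i j := by
    simp only [Finset.sum_filter]
    rw [Finset.sum_comm]
    simp only [hF]
  rw [two_mul]
  nth_rewrite 2 [hswap]
  rw [← Finset.sum_add_distrib, ← Finset.sum_add_distrib]
  refine Finset.sum_congr rfl fun i hi => ?_
  have hd : F i i = ∑ j ∈ Finset.range n, if i = j then F i j else 0 := by
    rw [Finset.sum_ite_eq, if_pos hi]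
  rw [hd, Finset.sum_filter, Finset.sum_filter, ← Finset.sum_add_distrib,
    ← Finset.sum_add_distrib]
  refine Finset.sum_congr rfl fun j _ => ?_
  rcases lt_trichotomy i j with h | h | h
  · simp [h, h.not_gt, h.ne]
  · simp [h]
  · simp [h, h.ne', h.not_gt]

/-- Condition (E) bounds the empirical second moments of the entries uniformly in `n`. -/
lemma second_moment_bound {B : (n : ℕ) → ℕ → ℕ → ℕ} (hsym : ∀ n i j, B n i j = B n j i)
    (hE : CondE B) : ∃ C : ℝ, ∀ n, 0 < n →
      (∑ i ∈ Finset.range n, ∑ j ∈ Finset.range n, (B n i j : ℝ) ^ 2) / (n : ℝ) ^ 2 ≤ C := by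
  obtain ⟨lam, hlam, C, hC⟩ := hE
  have hpt : ∀ k : ℕ, (k : ℝ) ^ 2 ≤ 2 / lam ^ 2 * Real.exp (lam * k) := by
    intro k
    have h := Real.pow_div_factorial_le_exp (lam * k) (by positivity) 2
    rw [div_mul_eq_mul_div, le_div_iff₀ (by positivity)]
    norm_num [Nat.factorial] at h
    nlinarith
  refine ⟨2 / lam ^ 2 * C, fun n hn => ?_⟩
  have hn' : (0:ℝ) < n := by exact_mod_cast hn
  rw [div_le_iff₀ (by positivity)]
  calc ∑ i ∈ Finset.range n, ∑ j ∈ Finset.range n, (B n i j : ℝ) ^ 2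
      ≤ ∑ i ∈ Finset.range n, ∑ j ∈ Finset.range n,
          2 / lam ^ 2 * Real.exp (lam * (B n i j : ℝ)) :=
        Finset.sum_le_sum fun i _ => Finset.sum_le_sum fun j _ => hpt _
    _ = 2 / lam ^ 2 * ∑ i ∈ Finset.range n, ∑ j ∈ Finset.range n,
          Real.exp (lam * (B n i j : ℝ)) := by simp only [Finset.mul_sum]
    _ ≤ 2 / lam ^ 2 * (2 * (C * (n.choose 2 : ℝ)) + C * n) := by
        rw [sum_symm n _ fun i j => by rw [hsym]]
        have := hC n
        gcongr
        · exact this.1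
        · exact this.2
    _ = 2 / lam ^ 2 * C * (n : ℝ) ^ 2 := by rw [Nat.cast_choose_two]; ring

/-! ### Convergence of the law of the multiplicity -/

/-- The law of the multiplicity of a uniformly chosen pair of vertices converges pointwise to the
law given by the multigraphon. -/
lemma tendsto_multiplicity {B : (n : ℕ) → ℕ → ℕ → ℕ} (hB : ∀ n, IsAdjOn n (B n))
    {W : ℝ → ℝ → ℕ → ℝ} (hW : IsMultigraphon W) (hconv : GraphSeqConvTo B W) (l : ℕ) :
    Tendsto (fun n => ((Finset.univ.filter fun φ : Fin 2 → Fin n =>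
        B n (φ 0) (φ 1) = l).card : ℝ) / (n : ℝ) ^ 2) atTop
      (𝓝 (∫ z, W z.1 z.2 l ∂unifSq)) := by
  have hlim : ∀ c : ℕ × ℕ × ℕ, Tendsto (fun n => ((Finset.univ.filter fun φ =>
      pairType (B n) n φ = c).card : ℝ) / (n : ℝ) ^ 2) atTop
      (𝓝 (∫ z, pairWeight W c z ∂unifSq)) := by
    intro c
    by_cases h : 2 ∣ c.1 ∧ 2 ∣ c.2.2
    · have := hconv 2 _ (isAdjOn_pairMat h.1 h.2)
      rw [tEqW_pairMat] at this
      simpa only [tEqB_pairMat (hB _).1] using this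
    · -- An odd diagonal entry has frequency zero in `B n` and weight zero in `W`.
      have h0 : ∀ n, (Finset.univ.filter fun φ => pairType (B n) n φ = c) = ∅ := by
        intro n
        refine Finset.filter_eq_empty_iff.2 fun φ _ hφ => h ?_
        rw [← hφ]
        exact ⟨(hB n).2.1 _, (hB n).2.1 _⟩
      have h1 : ∀ z, pairWeight W c z = 0 := by
        intro z
        have odd : ∀ x k, ¬ 2 ∣ k → W x x k = 0 := by
          intro x k hk
          have : k = 2 * (k / 2) + 1 := by omega
          rw [this]
          exact hW.2.2.2.2 x _
        rw [not_and_or] at h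
        rcases h with h | h <;> simp [pairWeight, odd _ _ h]
      simp [h0, h1]
  have hn1 : ∀ᶠ n : ℕ in atTop, 0 < n := eventually_gt_atTop 0
  have hcard : ∀ n : ℕ, 0 < n → (∑ _φ : Fin 2 → Fin n, (1:ℝ)) / (n : ℝ) ^ 2 = 1 := by
    intro n hn
    have : (n : ℝ) ≠ 0 := by positivity
    simp [this]
  have hq := fun u h0 h1 => hasSum_pairWeight hW u h0 h1
  have htot : HasSum (fun c => ∫ z, pairWeight W c z ∂unifSq) 1 := by
    have h := hq (fun _ => 1) (by simp) (by simp)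
    have e : ∫ z, ∑' l, (1:ℝ) * W z.1 z.2 l ∂unifSq = 1 := by
      have : (fun z : ℝ × ℝ => ∑' l, (1:ℝ) * W z.1 z.2 l) =ᵐ[unifSq] fun _ => 1 := by
        filter_upwards [ae_unifSq] with z hz
        simpa using (hasSum_fibre hW hz.1 hz.2).tsum_eq
      rw [integral_congr_ae this]
      simp
    rw [e] at h
    simpa using h
  have hind := hq (fun k => if k = l then 1 else 0) (fun k => by split_ifs <;> simp)
    (fun k => by split_ifs <;> simp)
  have hval : ∀ z : ℝ × ℝ, ∑' k, (if k = l then (1:ℝ) else 0) * W z.1 z.2 k = W z.1 z.2 l := by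
    intro z
    rw [tsum_eq_single l fun k hk => by simp [hk]]
    simp
  simp only [hval] at hind
  rw [← hind.tsum_eq]
  have hemp : ∀ n, HasSum (fun c : ℕ × ℕ × ℕ => (if c.2.1 = l then (1:ℝ) else 0) *
      (((Finset.univ.filter fun φ => pairType (B n) n φ = c).card : ℝ) / (n : ℝ) ^ 2))
      (((Finset.univ.filter fun φ : Fin 2 → Fin n =>
        B n (φ 0) (φ 1) = l).card : ℝ) / (n : ℝ) ^ 2) := by
    intro n
    have := hasSum_empirical (pairType (B n) n)
      (fun c : ℕ × ℕ × ℕ => if c.2.1 = l then (1:ℝ) else 0) ((n : ℝ) ^ 2)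
    rw [Finset.sum_boole] at this
    exact this
  refine tendsto_moment
    (fun n c => ((Finset.univ.filter fun φ => pairType (B n) n φ = c).card : ℝ) / (n : ℝ) ^ 2)
    _ (fun c => if c.2.1 = l then 1 else 0) _
    (fun n => ((Finset.univ.filter fun φ : Fin 2 → Fin n =>
        B n (φ 0) (φ 1) = l).card : ℝ) / (n : ℝ) ^ 2) 1
    (fun n c => by positivity) hlim ?_ htot (Eventually.of_forall hemp) ?_
  · filter_upwards [hn1] with n hn
    have := hasSum_empirical (pairType (B n) n) (fun _ => (1:ℝ)) ((n : ℝ) ^ 2)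
    rw [hcard n hn] at this
    simpa using this
  · filter_upwards [hn1] with n hn
    refine ⟨by simpa using hemp n, ?_⟩
    rw [← hcard n hn, ← Finset.sum_boole]
    gcongr
    split_ifs <;> simp

/-! ### Convergence of the edge density -/

/-- Convergence of the edge densities: if `B_n → W` and condition (E) holds then
`2m(n)/n² → ρ(W)`. -/
theorem edge_density_converges
    (m : ℕ → ℕ) (B : (n : ℕ) → ℕ → ℕ → ℕ)
    (hBadm : ∀ n, IsAdjOnM n (m n) (B n))
    (W : ℝ → ℝ → ℕ → ℝ) (hW : IsMultigraphon W)
    (hρfin : IntegrableOn (degW W) (Icc (0:ℝ) 1))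
    (hconv : GraphSeqConvTo B W)
    (hE : CondE B) :
    Tendsto (fun n => (2 * (m n : ℝ)) / (n : ℝ) ^ 2) atTop (𝓝 (rhoW W)) := by
  have hn1 : ∀ᶠ n : ℕ in atTop, 0 < n := eventually_gt_atTop 0
  have hlim := tendsto_multiplicity (fun n => (hBadm n).1) hW hconv
  obtain ⟨C, hC⟩ := second_moment_bound (fun n => (hBadm n).1.1) hE
  have hp : ∀ (n l : ℕ), (0:ℝ) ≤ ((Finset.univ.filter fun φ : Fin 2 → Fin n =>
      B n (φ 0) (φ 1) = l).card : ℝ) / (n : ℝ) ^ 2 := fun n l => by positivity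
  have hemp := fun n (h : ℕ → ℝ) => hasSum_empirical
    (fun φ : Fin 2 → Fin n => B n (φ 0) (φ 1)) h ((n : ℝ) ^ 2)
  have hint : ∀ l, Integrable (fun z : ℝ × ℝ => W z.1 z.2 l) unifSq := fun l =>
    (integrable_const (1:ℝ)).mono'
      (measurable_W hW measurable_fst measurable_snd l).aestronglyMeasurable
      (ae_of_all _ fun z => by
        rw [Real.norm_eq_abs, abs_of_nonneg (hW.2.1 _ _ _).1]; exact (hW.2.1 _ _ _).2)
  have hr : ∀ᶠ n in atTop, HasSum (fun l : ℕ => (l : ℝ) ^ 2 *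
      (((Finset.univ.filter fun φ : Fin 2 → Fin n =>
        B n (φ 0) (φ 1) = l).card : ℝ) / (n : ℝ) ^ 2))
      ((∑ φ : Fin 2 → Fin n, (B n (φ 0) (φ 1) : ℝ) ^ 2) / (n : ℝ) ^ 2) ∧
      (∑ φ : Fin 2 → Fin n, (B n (φ 0) (φ 1) : ℝ) ^ 2) / (n : ℝ) ^ 2 ≤ C := by
    filter_upwards [hn1] with n hn
    refine ⟨hemp n fun l => (l : ℝ) ^ 2, ?_⟩
    rw [sum_finTwoArrow n fun i j => (B n i j : ℝ) ^ 2]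
    exact hC n hn
  have hq0 : ∀ l, 0 ≤ ∫ z, W z.1 z.2 l ∂unifSq := fun l =>
    integral_nonneg fun z => (hW.2.1 _ _ _).1
  have hq1 : HasSum (fun l => ∫ z, W z.1 z.2 l ∂unifSq) 1 := by
    have h := hasSum_integral_of_dominated_convergence (μ := unifSq)
      (F := fun l z => W z.1 z.2 l) (f := fun _ => (1:ℝ)) (fun l z => W z.1 z.2 l)
      (fun l => (hint l).1)
      (fun l => ae_of_all _ fun z => by
        rw [Real.norm_eq_abs, abs_of_nonneg (hW.2.1 _ _ _).1])
      (by filter_upwards [ae_unifSq] with z hz using (hasSum_fibre hW hz.1 hz.2).summable)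
      ((integrable_const (1:ℝ)).congr (by
        filter_upwards [ae_unifSq] with z hz using (hasSum_fibre hW hz.1 hz.2).tsum_eq.symm))
      (by filter_upwards [ae_unifSq] with z hz using hasSum_fibre hW hz.1 hz.2)
    simpa using h
  have h1 : ∀ᶠ n : ℕ in atTop, HasSum (fun l => ((Finset.univ.filter fun φ : Fin 2 → Fin n =>
      B n (φ 0) (φ 1) = l).card : ℝ) / (n : ℝ) ^ 2) 1 := by
    filter_upwards [hn1] with n hn
    have hn' : (n : ℝ) ≠ 0 := by positivity
    have := hemp n fun _ => 1
    simpa [hn'] using this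
  have hsum : Summable fun l : ℕ => (l : ℝ) * ∫ z, W z.1 z.2 l ∂unifSq :=
    summable_of_sq hq0 hq1.summable (summable_sq_of_bound _ _ (fun l : ℕ => (l : ℝ)) _ C hp hlim hr)
  have main := tendsto_moment _ _ (fun l : ℕ => (l : ℝ)) _ _ C hp hlim h1 hq1
    (Eventually.of_forall fun n => hemp n fun l => (l : ℝ)) hr
  have hedge : ∀ n, (∑ φ : Fin 2 → Fin n, (B n (φ 0) (φ 1) : ℝ)) / (n : ℝ) ^ 2 =
      (2 * (m n : ℝ)) / (n : ℝ) ^ 2 := by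
    intro n
    rw [sum_finTwoArrow n fun i j => (B n i j : ℝ)]
    congr 1
    exact_mod_cast (hBadm n).2
  have hintl : ∀ l : ℕ, Integrable (fun z : ℝ × ℝ => (l : ℝ) * W z.1 z.2 l) unifSq :=
    fun l => (hint l).const_mul _
  have hnn : ∀ (l : ℕ) (z : ℝ × ℝ), 0 ≤ (l : ℝ) * W z.1 z.2 l := fun l z =>
    mul_nonneg (Nat.cast_nonneg l) (hW.2.1 _ _ _).1
  have hsum' : Summable fun l : ℕ => ∫ z, (l : ℝ) * W z.1 z.2 l ∂unifSq := by
    simpa only [integral_const_mul] using hsum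
  have hval : ∑' l : ℕ, (l : ℝ) * ∫ z, W z.1 z.2 l ∂unifSq = rhoW W := by
    have h := hasSum_integral_of_summable_integral_norm hintl
      (by simpa only [Real.norm_of_nonneg (hnn _ _)] using hsum')
    simp only [integral_const_mul] at h
    rw [h.tsum_eq]
    -- Integrability of the mean multiplicity on the square makes the iterated integral defining
    -- `rhoW` equal to the double integral, so no junk value enters.
    exact integral_prod _ (integrable_tsum_of_nonneg hintl hnn hsum')
  rw [hval] at main
  simpa only [hedge] using main

end
end

section
/- Fix κ, ρ ∈ (0,∞). Let (X_n(T))_{T≥0} be the edge reconnecting model with parameter κ on A_n^{m} with vertex exchangeable initial state satisfying E[e^{λ X_n(0,i,j)}] ≤ C for all i,j ∈ [n], for some λ ∈ (0, κ/ρ) and C < ∞. Fix i ≠ j in [n], write X(T) := X_n(T,i,j) and d(T,v) := d(X_n(T),v). For y > 0 define the stopping time τ_y := min{ T : (d(T,i)+κ)/(2m+nκ)·d(T,j)/(2m) + (d(T,j)+κ)/(2m+nκ)·d(T,i)/(2m) > y/m } and X_y(T) := X(T)·1[τ_y > T]. Then for all T ∈ ℕ: E[ e^{λ X_y(T)} ]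 ≤ max{ C, exp(y·λ·e^λ)·(1 + (e^λ−1)·y/m) }. -/
/-!
Put `u₀ = exp (λ a)` with `a = y e^λ`, and `r = (1 - e^{-λ}) / (λ m)`, so that `0 ≤ r ≤ 1`.

In one step from a state `B`, the entry `x = B i j` decreases by one when the removed edge joins
`i` and `j` (probability `x / m`) and increases by one when the inserted edge does (probability
`q(B)`, the quantity compared with `y / m` in the definition of `τ_y`). Since
`e^{λ(G - L)} ≤ 1 + (e^λ - 1) G - (1 - e^{-λ}) L` for indicators `G, L`, a state with
`q(B) ≤ y / m` satisfies
`E[e^{λ x'}] ≤ e^{λ x} (1 + (1 - e^{-λ}) (a - x) / m)`. The tangent line inequality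
`λ (a - x) + 1 ≤ e^{λ (a - x)}` turns this into the affine bound
`E[e^{λ x'}] ≤ (1 - r) e^{λ x} + r u₀` (`one_step_bound`).

Replacing `1[τ_y > T + 1]` by the larger `1[τ_y > T]` and conditioning on the trajectory up to time
`T`, which takes finitely many values, gives
`E[e^{λ X_y(T+1)}] ≤ (1 - r) E[e^{λ X_y(T)}] + r u₀` (`markov_step`). Hence by induction
`E[e^{λ X_y(T)}] ≤ max C u₀`, and `u₀` is at most the second term of the claimed maximum.
-/

open MeasureTheory Filter Set
open scoped Classical ENNReal Topology BigOperators

noncomputable section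

/-! ### The finite state space -/

lemma entry_le {n m : ℕ} {B : ℕ → ℕ → ℕ} (hB : IsAdjOnM n m B) (a b : ℕ) : B a b ≤ 2 * m := by
  by_cases h : n ≤ a ∨ n ≤ b
  · rw [hB.1.2.2 a b h]; exact Nat.zero_le _
  · push Not at h
    rw [← hB.2]
    calc B a b ≤ ∑ j ∈ Finset.range n, B a j :=
          Finset.single_le_sum (f := fun j => B a j) (fun _ _ => Nat.zero_le _)
            (Finset.mem_range.2 h.2)
      _ ≤ _ := Finset.single_le_sum (f := fun i => ∑ j ∈ Finset.range n, B i j)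
            (fun _ _ => Nat.zero_le _) (Finset.mem_range.2 h.1)

lemma finite_adj (n m : ℕ) : {B : ℕ → ℕ → ℕ | IsAdjOnM n m B}.Finite := by
  refine Set.Finite.of_finite_image (f := fun B => fun (a b : Fin n) => B a b) ?_ ?_
  · refine Set.Finite.subset (s := Set.pi Set.univ fun _ : Fin n =>
      Set.pi Set.univ fun _ : Fin n => Set.Iic (2 * m)) ?_ ?_
    · exact Set.Finite.pi fun _ => Set.Finite.pi fun _ => Set.finite_Iic _
    · rintro _ ⟨B, hB, rfl⟩
      intro a _ b _
      exact entry_le hB a b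
  · intro B hB B' hB' h
    funext a b
    by_cases hab : n ≤ a ∨ n ≤ b
    · rw [hB.1.2.2 a b hab, hB'.1.2.2 a b hab]
    · push Not at hab
      exact congrFun (congrFun h ⟨a, hab.1⟩) ⟨b, hab.2⟩

/-- The finite set `A_n^m` of possible states. -/
def states (n m : ℕ) : Finset (ℕ → ℕ → ℕ) := (finite_adj n m).toFinset

lemma mem_states {n m : ℕ} {B : ℕ → ℕ → ℕ} : B ∈ states n m ↔ IsAdjOnM n m B := by
  simp [states]

/-! ### The one-step estimate -/

/-- Probability that the step from `B` is `(V_old, W, V_new) = (v, w, u)`. -/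
def stepP (κ : ℝ) (n m : ℕ) (B : ℕ → ℕ → ℕ) (v w u : ℕ) : ℝ :=
  ((B v w : ℝ) / (2 * m)) * (((degB n B u : ℝ) + κ) / (2 * m + n * κ))

/-- Probability that the edge inserted in the step from `B` joins `i` and `j`. -/
def gainP (κ : ℝ) (n m : ℕ) (B : ℕ → ℕ → ℕ) (i j : ℕ) : ℝ :=
  ((degB n B i : ℝ) + κ) / (2 * (m : ℝ) + (n : ℝ) * κ) * ((degB n B j : ℝ) / (2 * (m : ℝ))) +
  ((degB n B j : ℝ) + κ) / (2 * (m : ℝ) + (n : ℝ) * κ) * ((degB n B i : ℝ) / (2 * (m : ℝ)))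

section OneStep

variable {κ : ℝ} {n m : ℕ} {B : ℕ → ℕ → ℕ}

lemma stepP_nonneg (hκ : 0 < κ) (v w u : ℕ) : 0 ≤ stepP κ n m B v w u := by
  unfold stepP; positivity

lemma sum_entries (hB : IsAdjOnM n m B) :
    ∑ v ∈ Finset.range n, ∑ w ∈ Finset.range n, (B v w : ℝ) = 2 * m := by
  exact_mod_cast hB.2

lemma sum_newP (hκ : 0 < κ) (hm : 0 < m) (hB : IsAdjOnM n m B) :
    ∑ u ∈ Finset.range n, ((degB n B u : ℝ) + κ) / (2 * m + n * κ) = 1 := by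
  have hm' : (0 : ℝ) < m := by exact_mod_cast hm
  have hpos : (0 : ℝ) < 2 * m + n * κ := by positivity
  rw [← Finset.sum_div, Finset.sum_add_distrib]
  have : ∑ u ∈ Finset.range n, (degB n B u : ℝ) = 2 * m := by
    rw [← sum_entries hB]; simp [degB]
  rw [this]
  simp only [Finset.sum_const, Finset.card_range, nsmul_eq_mul]
  exact div_self hpos.ne'

lemma sum_stepP (hκ : 0 < κ) (hm : 0 < m) (hB : IsAdjOnM n m B) :
    ∑ v ∈ Finset.range n, ∑ w ∈ Finset.range n, ∑ u ∈ Finset.range n, stepP κ n m B v w u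
      = 1 := by
  have hm' : (0 : ℝ) < m := by exact_mod_cast hm
  simp only [stepP, ← Finset.mul_sum, sum_newP hκ hm hB, mul_one, ← Finset.sum_div,
    sum_entries hB]
  field_simp

lemma sum_stepP_loss (hκ : 0 < κ) (hm : 0 < m) (hB : IsAdjOnM n m B) {i j : ℕ}
    (hi : i < n) (hj : j < n) :
    ∑ v ∈ Finset.range n, ∑ w ∈ Finset.range n, ∑ u ∈ Finset.range n,
      stepP κ n m B v w u * (if i = v ∧ j = w then 1 else 0) = (B i j : ℝ) / (2 * m) := by
  simp only [stepP, ← Finset.sum_mul, ← Finset.mul_sum, sum_newP hκ hm hB, mul_one]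
  simp [ite_and, hi, hj]

lemma sum_stepP_gain (hB : IsAdjOnM n m B) {i j : ℕ} (hi : i < n) (hj : j < n) :
    ∑ v ∈ Finset.range n, ∑ w ∈ Finset.range n, ∑ u ∈ Finset.range n,
      stepP κ n m B v w u * (if i = u ∧ j = w then 1 else 0) =
    ((degB n B i : ℝ) + κ) / (2 * m + n * κ) * ((degB n B j : ℝ) / (2 * m)) := by
  have hd : (degB n B j : ℝ) = ∑ v ∈ Finset.range n, (B v j : ℝ) := by
    simp only [degB, Nat.cast_sum]
    exact Finset.sum_congr rfl fun v _ => by rw [hB.1.1]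
  simp only [stepP, and_comm (a := i = _), ite_and]
  simp [hi, hj, hd, ← Finset.sum_mul, ← Finset.sum_div, mul_comm]

/-- The pointwise inequality `e^{λ(x - L + G)} ≤ e^{λx} (1 + (e^λ - 1) G - (1 - e^{-λ}) L)`, where
`L` and `G` indicate that the removed, respectively inserted, edge joins `i` and `j`. Positivity of
`B v w` makes the truncated subtraction in `stepER` exact. -/
lemma exp_step_le (hB : IsAdjOnM n m B) {i j v w u : ℕ} (hij : i ≠ j) (hvw : 0 < B v w)
    {lam : ℝ} (hlam : 0 < lam) :
    Real.exp (lam * (stepER B v w u i j : ℝ)) ≤ Real.exp (lam * (B i j : ℝ)) *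
      (1 + (Real.exp lam - 1) *
          ((if i = u ∧ j = w then 1 else 0) + (if j = u ∧ i = w then 1 else 0)) -
        (1 - Real.exp (-lam)) *
          ((if i = v ∧ j = w then 1 else 0) + (if j = v ∧ i = w then 1 else 0))) := by
  have hE : 0 < Real.exp (lam * (B i j : ℝ)) := Real.exp_pos _
  have h1 : 1 ≤ Real.exp lam := Real.one_le_exp hlam.le
  have hinv : Real.exp lam * Real.exp (-lam) = 1 := by rw [← Real.exp_add]; simp
  have key : ∀ (g l : Prop) [Decidable g] [Decidable l], (l → 0 < B i j) →
      stepER B v w u i j = B i j - (if l then 1 else 0) + (if g then 1 else 0) →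
      Real.exp (lam * (stepER B v w u i j : ℝ)) ≤ Real.exp (lam * (B i j : ℝ)) *
      (1 + (Real.exp lam - 1) * (if g then 1 else 0) -
        (1 - Real.exp (-lam)) * (if l then 1 else 0)) := by
    intro g l _ _ hl hs
    rw [hs]
    by_cases hl' : l
    · obtain ⟨k, hk⟩ : ∃ k, B i j = k + 1 := ⟨B i j - 1, by have := hl hl'; omega⟩
      by_cases hg : g
      · simp only [hl', hg, if_true, hk, Nat.add_sub_cancel]
        refine le_mul_of_one_le_right (Real.exp_pos _).le ?_
        nlinarith [sq_nonneg (Real.exp lam - 1), Real.exp_pos (-lam)]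
      · simp only [hl', hg, if_true, if_false, hk, Nat.add_sub_cancel]
        rw [show (1 + (Real.exp lam - 1) * 0 - (1 - Real.exp (-lam)) * 1 : ℝ)
          = Real.exp (-lam) by ring, ← Real.exp_add]
        apply le_of_eq; congr 1; push_cast; ring
    · by_cases hg : g
      · simp only [hl', hg, if_true, if_false, Nat.sub_zero]
        rw [show (1 + (Real.exp lam - 1) * 1 - (1 - Real.exp (-lam)) * 0 : ℝ)
          = Real.exp lam by ring, ← Real.exp_add]
        apply le_of_eq; congr 1; push_cast; ring
      · simp [hl', hg]
  have merge : ∀ (p q : Prop) [Decidable p] [Decidable q], ¬ (p ∧ q) →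
      ((if p then 1 else 0) + (if q then 1 else 0) : ℝ) = if p ∨ q then 1 else 0 := by
    intro p q _ _ hpq
    by_cases hp : p <;> by_cases hq : q <;> simp_all
  rw [merge _ _ (fun h => hij (h.1.1.trans h.2.1.symm)),
    merge _ _ (fun h => hij (h.1.1.trans h.2.1.symm))]
  apply key
  · rintro (⟨rfl, rfl⟩ | ⟨rfl, rfl⟩)
    · exact hvw
    · rw [hB.1.1]; exact hvw
  · simp only [stepER]
    split_ifs <;> omega

lemma sum_stepP_exp_le (hκ : 0 < κ) (hm : 0 < m) (hB : IsAdjOnM n m B) {i j : ℕ}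
    (hi : i < n) (hj : j < n) (hij : i ≠ j) {lam : ℝ} (hlam : 0 < lam) :
    ∑ v ∈ Finset.range n, ∑ w ∈ Finset.range n, ∑ u ∈ Finset.range n,
      stepP κ n m B v w u * Real.exp (lam * (stepER B v w u i j : ℝ)) ≤
    Real.exp (lam * (B i j : ℝ)) * (1 + (Real.exp lam - 1) * gainP κ n m B i j -
        (1 - Real.exp (-lam)) * ((B i j : ℝ) / m)) := by
  have hm' : (0 : ℝ) < m := by exact_mod_cast hm
  set E := Real.exp (lam * (B i j : ℝ)) with hE
  set α := Real.exp lam - 1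
  set β := 1 - Real.exp (-lam)
  calc _ ≤ ∑ v ∈ Finset.range n, ∑ w ∈ Finset.range n, ∑ u ∈ Finset.range n,
      (E * stepP κ n m B v w u
        + E * α * (stepP κ n m B v w u * (if i = u ∧ j = w then 1 else 0))
        + E * α * (stepP κ n m B v w u * (if j = u ∧ i = w then 1 else 0))
        - E * β * (stepP κ n m B v w u * (if i = v ∧ j = w then 1 else 0))
        - E * β * (stepP κ n m B v w u * (if j = v ∧ i = w then 1 else 0))) := by
        refine Finset.sum_le_sum fun v _ => Finset.sum_le_sum fun w _ =>
          Finset.sum_le_sum fun u _ => ?_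
        rcases Nat.eq_zero_or_pos (B v w) with h0 | hvw
        · simp [stepP, h0]
        · have := mul_le_mul_of_nonneg_left (exp_step_le (u := u) hB hij hvw hlam)
            (stepP_nonneg (κ := κ) (n := n) (m := m) (B := B) hκ v w u)
          refine this.trans (le_of_eq ?_)
          ring
    _ = _ := by
        simp only [Finset.sum_add_distrib, Finset.sum_sub_distrib, ← Finset.mul_sum,
          sum_stepP hκ hm hB, sum_stepP_loss hκ hm hB hi hj, sum_stepP_loss hκ hm hB hj hi,
          sum_stepP_gain hB hi hj, sum_stepP_gain hB hj hi, hB.1.1 j i]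
        unfold gainP
        field_simp
        ring

/-- In expectation over one step from a state with `gainP ≤ y / m`, the quantity `e^{λ x}` is mapped
below a convex combination of itself and the fixed level `exp (y λ e^λ)`. -/
lemma one_step_bound (hκ : 0 < κ) (hm : 0 < m) (hB : IsAdjOnM n m B) {i j : ℕ}
    (hi : i < n) (hj : j < n) (hij : i ≠ j) {lam : ℝ} (hlam : 0 < lam) {y : ℝ}
    (hgood : gainP κ n m B i j ≤ y / m) :
    ∑ v ∈ Finset.range n, ∑ w ∈ Finset.range n, ∑ u ∈ Finset.range n,
      stepP κ n m B v w u * Real.exp (lam * (stepER B v w u i j : ℝ)) ≤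
    (1 - (1 - Real.exp (-lam)) / (lam * m)) * Real.exp (lam * (B i j : ℝ)) +
      (1 - Real.exp (-lam)) / (lam * m) * Real.exp (y * lam * Real.exp lam) := by
  have hm' : (0 : ℝ) < m := by exact_mod_cast hm
  refine (sum_stepP_exp_le hκ hm hB hi hj hij hlam).trans ?_
  set x : ℝ := (B i j : ℝ)
  have h1 : 1 ≤ Real.exp lam := Real.one_le_exp hlam.le
  have hinv : Real.exp (-lam) * Real.exp lam = 1 := by rw [← Real.exp_add]; simp
  have hβ : 0 ≤ 1 - Real.exp (-lam) := by
    have : Real.exp (-lam) ≤ 1 := Real.exp_le_one_iff.2 (by linarith)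
    linarith
  have hE := Real.exp_pos (lam * x)
  have step1 : Real.exp (lam * x) * (1 + (Real.exp lam - 1) * gainP κ n m B i j -
      (1 - Real.exp (-lam)) * (x / m)) ≤
      Real.exp (lam * x) * (1 + (1 - Real.exp (-lam)) / m * (y * Real.exp lam - x)) := by
    refine mul_le_mul_of_nonneg_left ?_ hE.le
    have h2 := mul_le_mul_of_nonneg_left hgood (sub_nonneg.2 h1)
    have h3 : (Real.exp lam - 1) * (y / m) = (1 - Real.exp (-lam)) / m * (y * Real.exp lam) := by
      field_simp
      linear_combination y * hinv
    have h4 : (1 - Real.exp (-lam)) * (x / m) = (1 - Real.exp (-lam)) / m * x := by ring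
    rw [mul_sub]
    linarith
  -- tangent line of `exp` at `0`, scaled by `e^{λ x}`
  have step2 : Real.exp (lam * x) * (lam * (y * Real.exp lam - x)) ≤
      Real.exp (y * lam * Real.exp lam) - Real.exp (lam * x) := by
    have h := Real.add_one_le_exp (lam * (y * Real.exp lam - x))
    have h5 : Real.exp (y * lam * Real.exp lam) =
        Real.exp (lam * x) * Real.exp (lam * (y * Real.exp lam - x)) := by
      rw [← Real.exp_add]; congr 1; ring
    rw [h5]
    nlinarith
  have hr : 0 ≤ (1 - Real.exp (-lam)) / (lam * m) := by positivity
  have step3 := mul_le_mul_of_nonneg_left step2 hr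
  have h6 : (1 - Real.exp (-lam)) / (lam * m) *
      (Real.exp (lam * x) * (lam * (y * Real.exp lam - x))) =
      Real.exp (lam * x) * ((1 - Real.exp (-lam)) / m * (y * Real.exp lam - x)) := by
    field_simp
  rw [h6] at step3
  nlinarith

/-- Summing a nonnegative function against `transER` over the state space is at most its expectation
over the choice of `(V_old, W, V_new)`. -/
lemma sum_transER_le (hκ : 0 < κ) (f : (ℕ → ℕ → ℕ) → ℝ) (hf : ∀ B', 0 ≤ f B') :
    ∑ B' ∈ states n m, f B' * transER κ n m B B' ≤
    ∑ v ∈ Finset.range n, ∑ w ∈ Finset.range n, ∑ u ∈ Finset.range n,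
      stepP κ n m B v w u * f (stepER B v w u) := by
  have h : ∀ B', f B' * transER κ n m B B' =
      ∑ v ∈ Finset.range n, ∑ w ∈ Finset.range n, ∑ u ∈ Finset.range n,
        (if B' = stepER B v w u then stepP κ n m B v w u * f (stepER B v w u) else 0) := by
    intro B'
    simp only [transER, Finset.mul_sum]
    refine Finset.sum_congr rfl fun v _ => Finset.sum_congr rfl fun w _ =>
      Finset.sum_congr rfl fun u _ => ?_
    split_ifs with h
    · rw [← h]; simp only [stepP]; ring
    · ring
  simp only [h]
  rw [Finset.sum_comm]
  refine Finset.sum_le_sum fun v _ => ?_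
  rw [Finset.sum_comm]
  refine Finset.sum_le_sum fun w _ => ?_
  rw [Finset.sum_comm]
  refine Finset.sum_le_sum fun u _ => ?_
  rw [Finset.sum_ite_eq']
  split_ifs
  · exact le_rfl
  · exact mul_nonneg (stepP_nonneg hκ v w u) (hf _)

lemma transER_nonneg (hκ : 0 < κ) (B' : ℕ → ℕ → ℕ) : 0 ≤ transER κ n m B B' := by
  unfold transER
  refine Finset.sum_nonneg fun v _ => Finset.sum_nonneg fun w _ => Finset.sum_nonneg fun u _ => ?_
  split_ifs <;> positivity

end OneStep

/-! ### Conditioning on the trajectory -/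

lemma lintegral_finite_range {Ω α : Type*} [MeasurableSpace Ω] (μ : Measure Ω) (f : Ω → α)
    (F : Finset α) (hF : ∀ ω, f ω ∈ F) (hf : ∀ a, MeasurableSet {ω | f ω = a}) (g : α → ℝ≥0∞) :
    ∫⁻ ω, g (f ω) ∂μ = ∑ a ∈ F, g a * μ {ω | f ω = a} := by
  have h : ∀ ω, g (f ω) = ∑ a ∈ F, ({ω | f ω = a}.indicator (fun _ => g a)) ω := by
    intro ω
    simp only [Set.indicator_apply, Set.mem_ofPred_eq]
    rw [Finset.sum_ite_eq]
    simp [hF ω]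
  simp only [h]
  rw [lintegral_finsetSum _ fun a _ => measurable_const.indicator (hf a)]
  exact Finset.sum_congr rfl fun a _ => lintegral_indicator_const (hf a) _

section Markov

variable {Ω : Type} [MeasurableSpace Ω] {μ : Measure Ω}
  {κ : ℝ} {n m : ℕ} {X : ℕ → Ω → ℕ → ℕ → ℕ}

/-- The trajectory up to time `T`. -/
def hist (X : ℕ → Ω → ℕ → ℕ → ℕ) (T : ℕ) (ω : Ω) : Fin (T + 1) → ℕ → ℕ → ℕ := fun S => X S ω

/-- Extension of a finite trajectory by zero matrices, the form in which `IsEdgeReconnecting`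
takes the past. -/
def extHist {T : ℕ} (h : Fin (T + 1) → ℕ → ℕ → ℕ) (S : ℕ) : ℕ → ℕ → ℕ :=
  if hS : S < T + 1 then h ⟨S, hS⟩ else 0

lemma hist_eq_iff {Ω : Type} {X : ℕ → Ω → ℕ → ℕ → ℕ} {T : ℕ}
    (h : Fin (T + 1) → ℕ → ℕ → ℕ) (ω : Ω) :
    hist X T ω = h ↔ ∀ S ≤ T, X S ω = extHist h S := by
  constructor
  · rintro rfl S hS
    simp [extHist, hist, Nat.lt_succ_of_le hS]
  · intro H
    funext S
    have := H S (Nat.le_of_lt_succ S.2)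
    rwa [extHist, dif_pos S.2] at this

lemma measurableSet_X_eq (hER : IsEdgeReconnecting κ μ n m X) (T : ℕ) (B : ℕ → ℕ → ℕ) :
    MeasurableSet {ω | X T ω = B} := by
  have : {ω | X T ω = B} = ⋂ a, ⋂ b, {ω | X T ω a b = B a b} := by
    ext ω; simp [funext_iff]
  rw [this]
  exact MeasurableSet.iInter fun a => MeasurableSet.iInter fun b =>
    hER.1 T a b (MeasurableSet.singleton (B a b))

lemma measurableSet_hist_eq (hER : IsEdgeReconnecting κ μ n m X) (T : ℕ)
    (h : Fin (T + 1) → ℕ → ℕ → ℕ) : MeasurableSet {ω | hist X T ω = h} := by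
  have : {ω | hist X T ω = h} = ⋂ S : Fin (T + 1), {ω | X S ω = h S} := by
    ext ω; simp [funext_iff, hist]
  rw [this]
  exact MeasurableSet.iInter fun S => measurableSet_X_eq hER S _

lemma hist_mem (hER : IsEdgeReconnecting κ μ n m X) (T : ℕ) (ω : Ω) :
    hist X T ω ∈ Fintype.piFinset (fun _ : Fin (T + 1) => states n m) :=
  Fintype.mem_piFinset.2 fun S => mem_states.2 (hER.2.1 S ω)

lemma joint_prob (hER : IsEdgeReconnecting κ μ n m X) (T : ℕ) (h : Fin (T + 1) → ℕ → ℕ → ℕ)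
    (B' : ℕ → ℕ → ℕ) :
    μ {ω | (hist X T ω, X (T + 1) ω) = (h, B')} =
      μ {ω | hist X T ω = h} * ENNReal.ofReal (transER κ n m (h (Fin.last T)) B') := by
  have h1 := hER.2.2 T (extHist h) B'
  have h2 : extHist h T = h (Fin.last T) := by simp [extHist, Fin.last]
  rw [h2] at h1
  simpa only [Prod.mk.injEq, hist_eq_iff] using h1

/-- A one-step bound on conditional expectations given the trajectory integrates to a bound on
expectations. -/
lemma markov_integrate (hκ : 0 < κ) (hER : IsEdgeReconnecting κ μ n m X) (T : ℕ)
    (g : (Fin (T + 1) → ℕ → ℕ → ℕ) → (ℕ → ℕ → ℕ) → ℝ) (hg : ∀ h B', 0 ≤ g h B')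
    (k : (Fin (T + 1) → ℕ → ℕ → ℕ) → ℝ)
    (hk : ∀ h, (∀ S, IsAdjOnM n m (h S)) →
      ∑ v ∈ Finset.range n, ∑ w ∈ Finset.range n, ∑ u ∈ Finset.range n,
        stepP κ n m (h (Fin.last T)) v w u * g h (stepER (h (Fin.last T)) v w u) ≤ k h) :
    ∫⁻ ω, ENNReal.ofReal (g (hist X T ω) (X (T + 1) ω)) ∂μ ≤
      ∫⁻ ω, ENNReal.ofReal (k (hist X T ω)) ∂μ := by
  have e1 := lintegral_finite_range μ (fun ω => (hist X T ω, X (T + 1) ω))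
    (Fintype.piFinset (fun _ : Fin (T + 1) => states n m) ×ˢ states n m)
    (fun ω => Finset.mem_product.2 ⟨hist_mem hER T ω, mem_states.2 (hER.2.1 (T + 1) ω)⟩)
    (by
      rintro ⟨h, B'⟩
      simp only [Prod.mk.injEq]
      exact (measurableSet_hist_eq hER T h).inter (measurableSet_X_eq hER (T + 1) B'))
    (fun p => ENNReal.ofReal (g p.1 p.2))
  have e2 := lintegral_finite_range μ (hist X T) _ (hist_mem hER T)
    (measurableSet_hist_eq hER T) (fun h => ENNReal.ofReal (k h))
  rw [e1, e2, Finset.sum_product]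
  refine Finset.sum_le_sum fun h hh => ?_
  have hst : ∀ S, IsAdjOnM n m (h S) := fun S => mem_states.1 (Fintype.mem_piFinset.1 hh S)
  calc ∑ B' ∈ states n m, ENNReal.ofReal (g h B') * μ {ω | (hist X T ω, X (T + 1) ω) = (h, B')}
      = ∑ B' ∈ states n m, ENNReal.ofReal (g h B' * transER κ n m (h (Fin.last T)) B') *
          μ {ω | hist X T ω = h} := by
        refine Finset.sum_congr rfl fun B' _ => ?_
        rw [joint_prob hER, ENNReal.ofReal_mul (hg h B')]
        ring
    _ = ENNReal.ofReal (∑ B' ∈ states n m, g h B' * transER κ n m (h (Fin.last T)) B') *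
          μ {ω | hist X T ω = h} := by
        rw [← Finset.sum_mul, ENNReal.ofReal_sum_of_nonneg]
        exact fun B' _ => mul_nonneg (hg h B') (transER_nonneg hκ B')
    _ ≤ _ := by
        gcongr
        exact (sum_transER_le hκ (g h) (hg h)).trans (hk h hst)

/-- The recursion `E[e^{λ X_y(T+1)}] ≤ (1 - r) E[e^{λ X_y(T)}] + r exp (y λ e^λ)`. -/
lemma markov_step (hκ : 0 < κ) (hm : 0 < m) (hER : IsEdgeReconnecting κ μ n m X)
    {i j : ℕ} (hi : i < n) (hj : j < n) (hij : i ≠ j) {lam : ℝ} (hlam : 0 < lam)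
    {y : ℝ} (hy : 0 < y) (T : ℕ) :
    ∫⁻ ω, ENNReal.ofReal (Real.exp (lam *
        (if ∀ S ≤ T + 1, gainP κ n m (X S ω) i j ≤ y / m then (X (T + 1) ω i j : ℝ) else 0))) ∂μ ≤
    ∫⁻ ω, ENNReal.ofReal ((1 - (1 - Real.exp (-lam)) / (lam * m)) * Real.exp (lam *
        (if ∀ S ≤ T, gainP κ n m (X S ω) i j ≤ y / m then (X T ω i j : ℝ) else 0)) +
      (1 - Real.exp (-lam)) / (lam * m) * Real.exp (y * lam * Real.exp lam)) ∂μ := by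
  have hm' : (0 : ℝ) < m := by exact_mod_cast hm
  have hgood : ∀ ω, (∀ S ≤ T, gainP κ n m (X S ω) i j ≤ y / m) ↔
      ∀ S, gainP κ n m (hist X T ω S) i j ≤ y / m := fun ω =>
    ⟨fun H S => H S (Nat.le_of_lt_succ S.2), fun H S hS => H ⟨S, Nat.lt_succ_of_le hS⟩⟩
  have hmk := markov_integrate hκ hER T
    (fun h B' => Real.exp (lam *
      (if ∀ S, gainP κ n m (h S) i j ≤ y / m then (B' i j : ℝ) else 0)))
    (fun _ _ => (Real.exp_pos _).le)
    (fun h => (1 - (1 - Real.exp (-lam)) / (lam * m)) * Real.exp (lam *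
        (if ∀ S, gainP κ n m (h S) i j ≤ y / m then (h (Fin.last T) i j : ℝ) else 0)) +
      (1 - Real.exp (-lam)) / (lam * m) * Real.exp (y * lam * Real.exp lam))
    (by
      intro h hst
      by_cases hg : ∀ S, gainP κ n m (h S) i j ≤ y / m
      · simp only [hg, implies_true, if_true]
        exact one_step_bound hκ hm (hst _) hi hj hij hlam (hg _)
      · simp only [hg, if_false, mul_zero, Real.exp_zero, mul_one, sum_stepP hκ hm (hst _)]
        have hβ : Real.exp (-lam) ≤ 1 := Real.exp_le_one_iff.2 (by linarith)
        have hr : 0 ≤ (1 - Real.exp (-lam)) / (lam * m) :=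
          div_nonneg (by linarith) (by positivity)
        have h1 : 1 ≤ Real.exp (y * lam * Real.exp lam) := Real.one_le_exp (by positivity)
        nlinarith)
  refine le_trans (lintegral_mono fun ω => ?_) (hmk.trans (le_of_eq ?_))
  · refine ENNReal.ofReal_le_ofReal (Real.exp_le_exp.2 (mul_le_mul_of_nonneg_left ?_ hlam.le))
    -- survival beyond time `T + 1` implies survival beyond time `T`
    by_cases hg : ∀ S ≤ T + 1, gainP κ n m (X S ω) i j ≤ y / m
    · rw [if_pos hg, if_pos ((hgood ω).1 fun S hS => hg S (by omega))]
    · rw [if_neg hg]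
      split_ifs
      · positivity
      · exact le_rfl
  · simp only [hgood]
    rfl

end Markov

/-- The stopped exponential moment bound (inequality (18) of the paper):
`E[e^{λ X_y(T)}] ≤ max{C, e^{yλe^λ}(1+(e^λ−1)y/m)}`, where `X_y(T) = X(T)·1[τ_y > T]`. -/
theorem stopped_exponential_moment_bound
    (κ ρ : ℝ) (hκ : 0 < κ) (hρ : 0 < ρ)
    (Ω : Type) [MeasurableSpace Ω] (μ : Measure Ω) (hprob : IsProbabilityMeasure μ)
    (n m : ℕ) (X : ℕ → Ω → ℕ → ℕ → ℕ)
    (hER : IsEdgeReconnecting κ μ n m X)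
    (hexch : VertexExchangeable μ n (X 0))
    (lam C : ℝ) (hlam : 0 < lam) (hlamκρ : lam < κ / ρ)
    (hmom : ∀ i < n, ∀ j < n,
      ∫⁻ ω, ENNReal.ofReal (Real.exp (lam * (X 0 ω i j : ℝ))) ∂μ ≤ ENNReal.ofReal C)
    (i j : ℕ) (hi : i < n) (hj : j < n) (hij : i ≠ j)
    (y : ℝ) (hy : 0 < y) :
    ∀ T : ℕ,
      ∫⁻ ω, ENNReal.ofReal (Real.exp (lam *
          (if ∀ S ≤ T,
              ((degB n (X S ω) i : ℝ) + κ) / (2 * (m : ℝ) + (n : ℝ) * κ) *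
                  ((degB n (X S ω) j : ℝ) / (2 * (m : ℝ))) +
                ((degB n (X S ω) j : ℝ) + κ) / (2 * (m : ℝ) + (n : ℝ) * κ) *
                  ((degB n (X S ω) i : ℝ) / (2 * (m : ℝ)))
                ≤ y / (m : ℝ)
            then (X T ω i j : ℝ) else 0))) ∂μ
        ≤ ENNReal.ofReal (max C
            (Real.exp (y * lam * Real.exp lam) * (1 + (Real.exp lam - 1) * y / (m : ℝ)))) := by
  change ∀ T : ℕ, ∫⁻ ω, ENNReal.ofReal (Real.exp (lam *
      (if ∀ S ≤ T, gainP κ n m (X S ω) i j ≤ y / m then (X T ω i j : ℝ) else 0))) ∂μ ≤ _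
  set M := Real.exp (y * lam * Real.exp lam) * (1 + (Real.exp lam - 1) * y / (m : ℝ)) with hM
  have h1 : 1 ≤ Real.exp lam := Real.one_le_exp hlam.le
  have hu0M : Real.exp (y * lam * Real.exp lam) ≤ M := by
    refine le_mul_of_one_le_right (Real.exp_pos _).le ?_
    have : 0 ≤ (Real.exp lam - 1) * y / (m : ℝ) :=
      div_nonneg (mul_nonneg (sub_nonneg.2 h1) hy.le) (Nat.cast_nonneg m)
    linarith
  have h1u0 : 1 ≤ Real.exp (y * lam * Real.exp lam) := Real.one_le_exp (by positivity)
  rcases Nat.eq_zero_or_pos m with hm0 | hm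
  · -- without edges every entry vanishes and the left side is `1`
    intro T
    have hX : ∀ ω, X T ω i j = 0 := fun ω => by
      have := entry_le (hER.2.1 T ω) i j
      omega
    simp only [hX, Nat.cast_zero, ite_self, mul_zero, Real.exp_zero, lintegral_const,
      measure_univ, mul_one]
    exact ENNReal.ofReal_le_ofReal ((h1u0.trans hu0M).trans (le_max_right _ _))
  have hm' : (1 : ℝ) ≤ m := by exact_mod_cast hm
  set r := (1 - Real.exp (-lam)) / (lam * m) with hr
  have hβ : Real.exp (-lam) ≤ 1 := Real.exp_le_one_iff.2 (by linarith)
  have hr0 : 0 ≤ r := div_nonneg (by linarith) (by positivity)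
  have hr1 : r ≤ 1 := by
    rw [hr, div_le_one (by positivity)]
    have := Real.add_one_le_exp (-lam)
    nlinarith
  have hK0 : 0 ≤ max C M := le_trans (by linarith) (le_max_right C M)
  intro T
  induction T with
  | zero =>
    refine le_trans (lintegral_mono fun ω => ?_)
      ((hmom i hi j hj).trans (ENNReal.ofReal_le_ofReal (le_max_left C M)))
    refine ENNReal.ofReal_le_ofReal (Real.exp_le_exp.2 (mul_le_mul_of_nonneg_left ?_ hlam.le))
    split_ifs
    · exact le_rfl
    · positivity
  | succ T ih =>
    refine (markov_step hκ hm hER hi hj hij hlam hy T).trans ?_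
    rw [← hr]
    have hsplit : ∀ e : ℝ, ENNReal.ofReal ((1 - r) * Real.exp e +
        r * Real.exp (y * lam * Real.exp lam)) =
        ENNReal.ofReal (1 - r) * ENNReal.ofReal (Real.exp e) +
          ENNReal.ofReal (r * Real.exp (y * lam * Real.exp lam)) := fun e => by
      rw [ENNReal.ofReal_add (mul_nonneg (by linarith) (Real.exp_pos _).le)
        (mul_nonneg hr0 (Real.exp_pos _).le), ENNReal.ofReal_mul (by linarith)]
    simp only [hsplit]
    rw [lintegral_add_right _ measurable_const, lintegral_const_mul' _ _ ENNReal.ofReal_ne_top,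
      lintegral_const, measure_univ, mul_one]
    calc _ ≤ ENNReal.ofReal (1 - r) * ENNReal.ofReal (max C M) +
          ENNReal.ofReal (r * max C M) :=
          add_le_add (mul_le_mul_right ih _) (ENNReal.ofReal_le_ofReal
            (mul_le_mul_of_nonneg_left (hu0M.trans (le_max_right C M)) hr0))
      _ = ENNReal.ofReal (max C M) := by
          rw [← ENNReal.ofReal_mul (by linarith), ← ENNReal.ofReal_add
            (mul_nonneg (by linarith) hK0) (mul_nonneg hr0 hK0)]
          congr 1
          ring

end
end
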